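/- For every integer n ≥ 40, B̃(n+1) + B̃(n-1) - 2·B̃(n) > 72π/((n+1)·(24n+23)^{3/2}) - 4·log(μ(n-1))/(n-1)³ - 2·log(n-1)/(n-1)³ + 3/(n-1)³, where B̃(m) = (1/m)·log T̃(m) - (1/m)·log m. -/

import Mathlib

open Real Filter Topology

/-- The partition function, as a real number. -/
noncomputable def p (n : ℕ) : ℝ := (Fintype.card (Nat.Partition n) : ℝ)

/-- `μ(x) = (π/6)·√(24x - 1)`. -/
noncomputable def mu (x : ℝ) : ℝ := π / 6 * Real.sqrt (24 * x - 1)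

/-- `d = π²/(6√3)`. -/
noncomputable def d : ℝ := π ^ 2 / (6 * Real.sqrt 3)

/-- The main term `T̃(x) = (d/μ(x)²)·(1 - 1/μ(x))·e^{μ(x)}`. -/
noncomputable def T (x : ℝ) : ℝ := d / mu x ^ 2 * (1 - 1 / mu x) * Real.exp (mu x)

/-- `B̃(n) = (1/n)·log T̃(n) - (1/n)·log n`. -/
noncomputable def B (n : ℕ) : ℝ :=
  1 / (n : ℝ) * Real.log (T (n : ℝ)) - 1 / (n : ℝ) * Real.log (n : ℝ)

/-- Lower bound for the second difference of `√(24x - 1) / x`, with `U`, `V`, `W` the values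
of `√(24y - 1)` at `y = x - 1, x, x + 1`. -/
theorem sqrt_div_second_difference {x U V W : ℝ} (hx : 40 ≤ x) (hU : 0 < U) (hV : 0 < V)
    (hW : 0 < W) (hU2 : U ^ 2 = 24 * x - 25) (hV2 : V ^ 2 = 24 * x - 1)
    (hW2 : W ^ 2 = 24 * x + 23) :
    432 / ((x + 1) * W ^ 3) ≤ W / (x + 1) + U / (x - 1) - 2 * (V / x) := by
  have hUV : U ≤ V := by nlinarith
  have hVW : V ≤ W := by nlinarith
  have hx0 : 0 < x := by linarith
  have hx1 : 0 < x - 1 := by linarith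
  have hx2 : 0 < x + 1 := by linarith
  have hA : V - U ≤ 12 * V / (24 * x - 25) := by
    rw [← hU2, le_div_iff₀ (by positivity)]
    have h1 : (V - U) * (V + U) = 24 := by nlinarith
    have h2 : (V - U) * U ≤ 12 := by nlinarith
    nlinarith
  have hB : (V - U) - (W - V) ≤ 144 * V / (24 * x - 25) ^ 2 := by
    have h1 : (V - U) - (W - V) = 1152 / ((U + W) * (W + V) * (U + V)) := by
      rw [eq_div_iff (by positivity)]
      have e1 : (V - U) * (U + V) = 24 := by nlinarith
      have e2 : (W - V) * (W + V) = 24 := by nlinarith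
      have e3 : (W - U) * (U + W) = 48 := by nlinarith
      linear_combination (U + W) * (W + V) * e1 - (U + W) * (U + V) * e2 + 24 * e3
    rw [h1, ← hU2, div_le_div_iff₀ (by positivity) (by positivity)]
    have e1 : 2 * U ≤ U + W := by linarith
    have e2 : 2 * U ≤ W + V := by linarith
    have e3 : 2 * U ≤ U + V := by linarith
    have h2 : (2 * U) * (2 * U) * (2 * U) ≤ (U + W) * (W + V) * (U + V) := by gcongr
    calc 1152 * (U ^ 2) ^ 2 = 144 * U * ((2 * U) * (2 * U) * (2 * U)) := by ring
      _ ≤ 144 * V * ((U + W) * (W + V) * (U + V)) := by gcongr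
  have hC : 432 / W ^ 3 ≤ V * (432 / ((24 * x + 23) * (24 * x - 1))) := by
    rw [← hW2, ← hV2]
    calc 432 / W ^ 3 = 432 / (W ^ 2 * W) := by ring
      _ ≤ 432 / (W ^ 2 * V) := by gcongr
      _ = _ := by field_simp
  have hR : 432 / ((24 * x + 23) * (24 * x - 1)) ≤
      2 / (x * (x - 1)) - 24 / ((x - 1) * (24 * x - 25)) - 144 / (24 * x - 25) ^ 2 := by
    obtain ⟨t, rfl⟩ : ∃ t, x = t + 40 := ⟨x - 40, by ring⟩
    have ht : 0 ≤ t := by linarith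
    have p1 : 0 < 24 * (t + 40) - 25 := by linarith
    have p2 : 0 < 24 * (t + 40) - 1 := by linarith
    have q1 : (t + 40) * 24 - 25 ≠ 0 := by linarith
    have q2 : (t + 40) * 24 - 1 ≠ 0 := by linarith
    rw [← sub_nonneg]
    have : 2 / ((t + 40) * ((t + 40) - 1)) - 24 / (((t + 40) - 1) * (24 * (t + 40) - 25))
        - 144 / (24 * (t + 40) - 25) ^ 2 - 432 / ((24 * (t + 40) + 23) * (24 * (t + 40) - 1))
        = (2 * (24 * (t + 40) - 25) ^ 2 * ((24 * (t + 40) + 23) * (24 * (t + 40) - 1))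
          - 24 * (t + 40) * (24 * (t + 40) - 25) * ((24 * (t + 40) + 23) * (24 * (t + 40) - 1))
          - 144 * ((t + 40) * ((t + 40) - 1)) * ((24 * (t + 40) + 23) * (24 * (t + 40) - 1))
          - 432 * ((t + 40) * ((t + 40) - 1)) * (24 * (t + 40) - 25) ^ 2)
          / ((t + 40) * ((t + 40) - 1) * (24 * (t + 40) - 25) ^ 2
            * ((24 * (t + 40) + 23) * (24 * (t + 40) - 1))) := by
      field_simp
    rw [this]
    apply div_nonneg
    · ring_nf
      positivity
    · positivity
  have hS : (W / (x + 1) + U / (x - 1) - 2 * (V / x)) * (x + 1)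
      = 2 * V / (x * (x - 1)) - (V - U) * (2 / (x - 1)) - ((V - U) - (W - V)) := by
    field_simp
    ring
  have hA' : (V - U) * (2 / (x - 1)) ≤ V * (24 / ((x - 1) * (24 * x - 25))) := by
    have p1 : 0 < 24 * x - 25 := by linarith
    calc (V - U) * (2 / (x - 1)) ≤ 12 * V / (24 * x - 25) * (2 / (x - 1)) := by gcongr
      _ = _ := by field_simp; ring
  have hR' := mul_le_mul_of_nonneg_left hR hV.le
  have hfin : 432 / W ^ 3 ≤ (W / (x + 1) + U / (x - 1) - 2 * (V / x)) * (x + 1) := by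
    rw [hS]
    have e1 : V * (2 / (x * (x - 1)) - 24 / ((x - 1) * (24 * x - 25)) - 144 / (24 * x - 25) ^ 2)
      = 2 * V / (x * (x - 1)) - V * (24 / ((x - 1) * (24 * x - 25)))
        - 144 * V / (24 * x - 25) ^ 2 := by ring
    linarith
  calc 432 / ((x + 1) * W ^ 3) = 432 / W ^ 3 / (x + 1) := by field_simp
    _ ≤ _ := by rwa [div_le_iff₀ hx2]

/-- First-order part of the second difference of `-log y / x`. -/
theorem log_div_second_difference {x y : ℝ} (hy : 39 ≤ y) (hyx : y ≤ x) :
    14 / 5 / (x * (x ^ 2 - 1)) ≤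
      (log y - log (y - 1)) / (x - 1) - (log (y + 1) - log y) / (x + 1) := by
  have y0 : 0 < y := by linarith
  have y1 : 0 < y - 1 := by linarith
  have x1 : 0 < x - 1 := by linarith
  have x0 : 0 < x := by linarith
  have z : 0 < 2 * y - 1 := by linarith
  have hlo : 2 / (2 * y - 1) ≤ log y - log (y - 1) := by
    rw [← log_div y0.ne' y1.ne']
    have h := le_log_one_add_of_nonneg (x := 1 / (y - 1)) (by positivity)
    have e1 : 1 + 1 / (y - 1) = y / (y - 1) := by field_simp; ring
    have e2 : 2 * (1 / (y - 1)) / (1 / (y - 1) + 2) = 2 / (2 * y - 1) := by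
      have : 1 / (y - 1) + 2 = (2 * y - 1) / (y - 1) := by field_simp; ring
      rw [this]
      field_simp
    rwa [e1, e2] at h
  have hhi : log (y + 1) - log y ≤ (2 * y + 1) / (2 * y * (y + 1)) := by
    have y2 : 0 < y + 1 := by linarith
    rw [← log_div y2.ne' y0.ne']
    have hl : 0 ≤ log ((y + 1) / y) := log_nonneg (by rw [le_div_iff₀ y0]; linarith)
    have h := self_le_sinh_iff.2 hl
    rw [sinh_log (by positivity)] at h
    refine h.trans_eq ?_
    field_simp
    ring
  have h1 : 2 / (2 * y - 1) / (x - 1) ≤ (log y - log (y - 1)) / (x - 1) := by gcongr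
  have h2 : (log (y + 1) - log y) / (x + 1) ≤ (2 * y + 1) / (2 * y * (y + 1)) / (x + 1) := by
    gcongr
  have h3 : 14 / 5 / (x * (x ^ 2 - 1)) ≤
      2 / (2 * y - 1) / (x - 1) - (2 * y + 1) / (2 * y * (y + 1)) / (x + 1) := by
    have e : 2 / (2 * y - 1) / (x - 1) - (2 * y + 1) / (2 * y * (y + 1)) / (x + 1)
        = (4 * y * (y + 1) * (x + 1) - (2 * y + 1) * (2 * y - 1) * (x - 1))
          / ((2 * y - 1) * (2 * y * (y + 1))) / (x ^ 2 - 1) := by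
      have : x ^ 2 - 1 = (x - 1) * (x + 1) := by ring
      rw [this]
      field_simp
      ring
    have hx2 : 0 < x ^ 2 - 1 := by nlinarith
    rw [e, ← div_div]
    gcongr ?_ / _
    rw [div_le_div_iff₀ x0 (by positivity)]
    obtain ⟨s, rfl⟩ : ∃ s, x = y + s := ⟨x - y, by ring⟩
    obtain ⟨t, rfl⟩ : ∃ t, y = t + 39 := ⟨y - 39, by ring⟩
    have hs : 0 ≤ s := by linarith
    have ht : 0 ≤ t := by linarith
    rw [← sub_nonneg]
    ring_nf
    positivity
  linarith

/-- Upper bound for the second difference of `-log (1 - 1 / v) / x`, with `u`, `v`, `w` three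
successive values of a function whose square increases by `k` in each step. -/
theorem log_one_sub_inv_div_second_difference {x k u v w : ℝ} (hx : 40 ≤ x) (hk : 6 ≤ k)
    (hu : 0 < u) (hv : 0 < v) (hw : 0 < w) (hu2 : u ^ 2 = k * (x - 25 / 24))
    (hv2 : v ^ 2 = k * (x - 1 / 24)) (hw2 : w ^ 2 = k * (x + 23 / 24)) :
    -log (1 - 1 / w) / (x + 1) - log (1 - 1 / u) / (x - 1) + 2 * (log (1 - 1 / v) / x) ≤
      17 / 10 / (x * (x ^ 2 - 1)) := by
  have hu10 : 15 ≤ u := by nlinarith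
  have huv : u ≤ v := by nlinarith
  have hvw : v ≤ w := by nlinarith
  have u1 : 0 < u - 1 := by linarith
  have v1 : 0 < v - 1 := by linarith
  have w1 : 0 < w - 1 := by linarith
  have x0 : 0 < x := by linarith
  have x1 : 0 < x - 1 := by linarith
  have k0 : 0 < k := by linarith
  have hq : k / (v * (u - 1)) ≤ 23 / 20 / x := by
    rw [div_le_div_iff₀ (by positivity) x0]
    have h1 : u * (14 / 15 * u) ≤ v * (u - 1) := by
      gcongr
      linarith
    have h2 : k * x ≤ 23 / 20 * (14 / 15 * u ^ 2) := by
      rw [hu2]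
      nlinarith
    nlinarith
  have hlog : ∀ t : ℝ, 1 < t → log (1 - 1 / t) = log (t - 1) - log t := by
    intro t ht
    rw [← log_div (by linarith) (by linarith)]
    congr 1
    field_simp
  rw [hlog u (by linarith), hlog v (by linarith), hlog w (by linarith)]
  have hg : log v - log (v - 1) ≤ 1 / 14 := by
    rw [← log_div hv.ne' v1.ne']
    refine (log_le_sub_one_of_pos (by positivity)).trans ?_
    have : v / (v - 1) - 1 = 1 / (v - 1) := by field_simp; ring
    rw [this]
    gcongr
    linarith
  have hd : (log u - log (u - 1)) - (log v - log (v - 1)) ≤ 23 / 600 / x := by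
    have e : (log u - log (u - 1)) - (log v - log (v - 1))
        = log (u * (v - 1) / (v * (u - 1))) := by
      rw [log_div (by positivity) (by positivity), log_mul hu.ne' v1.ne', log_mul hv.ne' u1.ne']
      ring
    rw [e]
    refine (log_le_sub_one_of_pos (by positivity)).trans ?_
    have e2 : u * (v - 1) / (v * (u - 1)) - 1 = k / (v * (u - 1)) / (u + v) := by
      have hkk : (v - u) * (u + v) = k := by linear_combination hv2 - hu2
      have : u + v ≠ 0 := by positivity
      rw [← hkk]
      field_simp
      ring
    rw [e2]
    calc k / (v * (u - 1)) / (u + v) ≤ 23 / 20 / x / 30 := by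
          gcongr
          linarith
      _ = 23 / 600 / x := by ring
  have hdd : (log u - log (u - 1)) + (log w - log (w - 1)) - 2 * (log v - log (v - 1))
      ≤ (23 / 20 / x) ^ 2 := by
    have e : (log u - log (u - 1)) + (log w - log (w - 1)) - 2 * (log v - log (v - 1))
        = log (u * w / v ^ 2) + log ((v - 1) ^ 2 / ((u - 1) * (w - 1))) := by
      rw [log_div (by positivity) (by positivity), log_div (by positivity) (by positivity),
        log_mul hu.ne' hw.ne', log_mul u1.ne' w1.ne', log_pow, log_pow]
      push_cast
      ring
    have hp : (u * w) ^ 2 = (v ^ 2) ^ 2 - k ^ 2 := by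
      rw [mul_pow, hu2, hw2, hv2]
      ring
    have huw : u * w ≤ v ^ 2 := by
      refine (sq_le_sq₀ (by positivity) (by positivity)).1 ?_
      linarith [sq_nonneg k]
    have hsum : u + w ≤ 2 * v := by
      refine (sq_le_sq₀ (by positivity) (by positivity)).1 ?_
      linear_combination hu2 + hw2 - 2 * hv2 + 2 * huw
    have h1 : log (u * w / v ^ 2) ≤ 0 :=
      log_nonpos (by positivity) (by rw [div_le_one (by positivity)]; exact huw)
    have h2 : log ((v - 1) ^ 2 / ((u - 1) * (w - 1))) ≤ (k / (v * (u - 1))) ^ 2 := by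
      refine (log_le_sub_one_of_pos (by positivity)).trans ?_
      have h3 : (v ^ 2 - u * w) * v ^ 2 ≤ k ^ 2 := by
        have h := mul_nonneg (sub_nonneg.2 huw) (mul_pos hu hw).le
        linear_combination h - hp
      have h4 : v ^ 2 - u * w ≤ k ^ 2 / v ^ 2 := by rwa [le_div_iff₀ (by positivity)]
      calc (v - 1) ^ 2 / ((u - 1) * (w - 1)) - 1
          = ((v - 1) ^ 2 - (u - 1) * (w - 1)) / ((u - 1) * (w - 1)) := by
            field_simp
        _ ≤ (k ^ 2 / v ^ 2) / ((u - 1) * (w - 1)) := by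
            gcongr
            linear_combination h4 + hsum
        _ ≤ (k ^ 2 / v ^ 2) / ((u - 1) * (u - 1)) := by
            gcongr
            linarith
        _ = _ := by
            field_simp
    have h5 : (k / (v * (u - 1))) ^ 2 ≤ (23 / 20 / x) ^ 2 := by gcongr
    linarith
  set a := log u - log (u - 1)
  set b := log v - log (v - 1)
  set c := log w - log (w - 1)
  have hx2 : 0 < x ^ 2 - 1 := by nlinarith
  have e : -(log (w - 1) - log w) / (x + 1) - (log (u - 1) - log u) / (x - 1)
      + 2 * ((log (v - 1) - log v) / x)
      = (2 * b + 2 * x * (a - b) + x * (x - 1) * (a + c - 2 * b)) / (x * (x ^ 2 - 1)) := by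
    have : x ^ 2 - 1 = (x - 1) * (x + 1) := by ring
    rw [this]
    simp only [a, b, c]
    field_simp
    ring
  rw [e]
  gcongr
  have f1 : 2 * x * (a - b) ≤ 2 * x * (23 / 600 / x) := by gcongr
  have f2 : x * (x - 1) * (a + c - 2 * b) ≤ x * x * (23 / 20 / x) ^ 2 := by
    calc x * (x - 1) * (a + c - 2 * b) ≤ x * (x - 1) * (23 / 20 / x) ^ 2 := by gcongr
      _ ≤ _ := by
        gcongr
        linarith
  have g1 : 2 * x * (23 / 600 / x) = 23 / 300 := by field_simp; norm_num
  have g2 : x * x * (23 / 20 / x) ^ 2 = 529 / 400 := by field_simp; norm_num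
  linarith

theorem mu_sq {y : ℝ} (hy : 1 / 24 ≤ y) : mu y ^ 2 = 2 * π ^ 2 / 3 * (y - 1 / 24) := by
  rw [mu, mul_pow, Real.sq_sqrt (by linarith)]
  ring

theorem mu_pos {y : ℝ} (hy : 1 / 24 < y) : 0 < mu y :=
  mul_pos (by positivity) (Real.sqrt_pos.2 (by linarith))

theorem log_mu {y : ℝ} (hy : 1 / 24 < y) :
    2 * log (mu y) = 2 * log (π / 6) + log (24 * y - 1) := by
  have h : 0 < 24 * y - 1 := by linarith
  rw [mu, log_mul (by positivity) (Real.sqrt_pos.2 h).ne', Real.log_sqrt h.le]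
  ring

theorem log_T {y : ℝ} (hy : 1 ≤ y) :
    log (T y) = log 12 / 2 - log (24 * y - 1) + log (1 - 1 / mu y) + mu y := by
  have hm := mu_pos (y := y) (by linarith)
  have h1 : 1 < mu y := by
    have := mu_sq (y := y) (by linarith)
    have := pi_gt_three
    nlinarith
  have hd : d ≠ 0 := by
    unfold d
    positivity
  have h2 : 1 - 1 / mu y ≠ 0 := by
    have : 1 / mu y < 1 := by rwa [div_lt_one hm]
    linarith
  have hm2 : mu y ^ 2 ≠ 0 := by positivity
  have hdm : d / mu y ^ 2 = √12 / (24 * y - 1) := by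
    have h24 : 24 * y - 1 ≠ 0 := by linarith
    have h12 : √12 = 2 * √3 := by
      rw [show (12 : ℝ) = 2 ^ 2 * 3 by norm_num, Real.sqrt_mul (by norm_num),
        Real.sqrt_sq (by norm_num)]
    have h3 : √3 ^ 2 = 3 := Real.sq_sqrt (by norm_num)
    rw [div_eq_div_iff hm2 h24, mu_sq (by linarith), d, h12]
    field_simp
    rw [h3]
    ring
  rw [T, log_mul (mul_ne_zero (div_ne_zero hd hm2) h2) (exp_ne_zero _),
    log_mul (div_ne_zero hd hm2) h2, log_exp, hdm,
    log_div (by positivity) (by linarith), Real.log_sqrt (by norm_num)]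

/-- Lower bound for the logarithmic part of the second difference of `B`. -/
theorem log_part_lower_bound {x : ℝ} (hx : 40 ≤ x) :
    (-4 * log (mu (x - 1)) - 2 * log (x - 1) + 3) / (x - 1) ^ 3 <
      (log 12 - 2 * log x - 2 * log (24 * x - 1) + 39 / 10) / (x * (x ^ 2 - 1)) := by
  have hl2 := log_two_gt_d9
  have hl2' := log_two_lt_d9
  have h12 : 2.38 ≤ log 12 := by
    rw [show (12 : ℝ) = 2 ^ 2 * 3 by norm_num, log_mul (by norm_num) (by norm_num), log_pow]
    have : 1 ≤ log 3 := by
      rw [le_log_iff_exp_le (by norm_num)]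
      exact exp_one_lt_three.le
    push_cast
    linarith
  have hpi : -log 2 ≤ log (π / 6) := by
    rw [← log_inv]
    apply log_le_log (by norm_num)
    linarith [pi_gt_three]
  have hlog_succ : ∀ y z : ℝ, 0 < y → y < z → z ≤ y * (1 + 3 / 100) →
      log z ≤ log y + 3 / 100 := by
    intro y z hy hyz hz
    have h : log z ≤ log (y * (1 + 3 / 100)) := log_le_log (by linarith) hz
    rw [log_mul hy.ne' (by norm_num)] at h
    have := log_le_sub_one_of_pos (x := 1 + 3 / 100) (by norm_num)
    linarith
  have h1 := hlog_succ (x - 1) x (by linarith) (by linarith) (by linarith)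
  have h2 := hlog_succ (24 * x - 25) (24 * x - 1) (by linarith) (by linarith) (by linarith)
  have hbig : ∀ y : ℝ, 32 ≤ y → 3 ≤ log y := by
    intro y hy
    have : log (2 ^ 5) ≤ log y := log_le_log (by norm_num) (by linarith)
    rw [log_pow] at this
    push_cast at this
    linarith
  have h3 := hbig (x - 1) (by linarith)
  have h4 := hbig (24 * x - 25) (by linarith)
  have hmu := log_mu (y := x - 1) (by linarith)
  rw [show 24 * (x - 1) - 1 = 24 * x - 25 by ring] at hmu
  have hM : 0 < (x - 1) ^ 3 := by
    have : 0 < x - 1 := by linarith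
    positivity
  have hMN : (x - 1) ^ 3 ≤ x * (x ^ 2 - 1) := by nlinarith
  have hN := hM.trans_le hMN
  set Q := -4 * log (mu (x - 1)) - 2 * log (x - 1) + 3
  have hQ : Q ≤ 0 := by
    simp only [Q]
    linarith
  calc Q / (x - 1) ^ 3 ≤ Q / (x * (x ^ 2 - 1)) := by
        rw [div_le_div_iff₀ hM hN]
        exact mul_le_mul_of_nonpos_left hMN hQ
    _ < _ := by
      gcongr
      simp only [Q]
      linarith

theorem second_difference_B_lower_bound (n : ℕ) (hn : 40 ≤ n) :
    B (n + 1) + B (n - 1) - 2 * B n >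
      72 * π / (((n : ℝ) + 1) * (24 * (n : ℝ) + 23) ^ ((3 : ℝ) / 2)) -
        4 * Real.log (mu ((n : ℝ) - 1)) / ((n : ℝ) - 1) ^ 3 -
        2 * Real.log ((n : ℝ) - 1) / ((n : ℝ) - 1) ^ 3 + 3 / ((n : ℝ) - 1) ^ 3 := by
  unfold B
  rw [Nat.cast_sub (by lia : 1 ≤ n), Nat.cast_add, Nat.cast_one]
  have hx : (40 : ℝ) ≤ n := by exact_mod_cast hn
  generalize (n : ℝ) = x at hx
  rw [log_T (y := x + 1) (by linarith), log_T (y := x - 1) (by linarith),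
    log_T (y := x) (by linarith)]
  have x0 : 0 < x := by linarith
  have x1 : 0 < x - 1 := by linarith
  have x2 : 0 < x + 1 := by linarith
  have hmain : 72 * π / ((x + 1) * (24 * x + 23) ^ ((3 : ℝ) / 2)) ≤
      mu (x + 1) / (x + 1) + mu (x - 1) / (x - 1) - 2 * (mu x / x) := by
    have h := sqrt_div_second_difference hx
      (Real.sqrt_pos.2 (show 0 < 24 * (x - 1) - 1 by linarith))
      (Real.sqrt_pos.2 (show 0 < 24 * x - 1 by linarith))
      (Real.sqrt_pos.2 (show 0 < 24 * (x + 1) - 1 by linarith))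
      (by rw [Real.sq_sqrt (by linarith)]; ring)
      (by rw [Real.sq_sqrt (by linarith)])
      (by rw [Real.sq_sqrt (by linarith)]; ring)
    have hpow : (24 * x + 23) ^ ((3 : ℝ) / 2) = √(24 * (x + 1) - 1) ^ 3 := by
      rw [show 24 * (x + 1) - 1 = 24 * x + 23 by ring, Real.sqrt_eq_rpow, ← Real.rpow_natCast,
        ← Real.rpow_mul (by linarith)]
      norm_num
    have h' := mul_le_mul_of_nonneg_left h (show 0 ≤ π / 6 by positivity)
    rw [hpow]
    simp only [mu]
    calc _ = π / 6 * (432 / ((x + 1) * √(24 * (x + 1) - 1) ^ 3)) := by ring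
      _ ≤ _ := h'
      _ = _ := by ring
  have hg := log_one_sub_inv_div_second_difference (k := 2 * π ^ 2 / 3) hx
    (by nlinarith [pi_gt_three])
    (mu_pos (y := x - 1) (by linarith)) (mu_pos (y := x) (by linarith))
    (mu_pos (y := x + 1) (by linarith))
    (by rw [mu_sq (by linarith)]; ring) (by rw [mu_sq (by linarith)])
    (by rw [mu_sq (by linarith)]; ring)
  have hl1 := log_div_second_difference (x := x) (y := x) (by linarith) le_rfl
  have hl2 := log_div_second_difference (x := x) (y := x - 1 / 24) (by linarith) (by linarith)
  have h24 : ∀ y : ℝ, 0 < y → log (24 * y) = log 24 + log y :=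
    fun y hy => log_mul (by norm_num) hy.ne'
  have a1 := h24 (x - 1 / 24) (by linarith)
  have a2 := h24 (x - 1 / 24 + 1) (by linarith)
  have a3 := h24 (x - 1 / 24 - 1) (by linarith)
  have b1 : log (24 * x - 1) = log 24 + log (x - 1 / 24) := by rw [← a1]; congr 1; ring
  have b2 : log (24 * (x + 1) - 1) = log 24 + log (x - 1 / 24 + 1) := by
    rw [← a2]; congr 1; ring
  have b3 : log (24 * (x - 1) - 1) = log 24 + log (x - 1 / 24 - 1) := by
    rw [← a3]; congr 1; ring
  have hlp := log_part_lower_bound hx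
  rw [b1] at hlp
  rw [b1, b2, b3]
  generalize log (x - 1 / 24) = p0 at *
  generalize log (x - 1 / 24 + 1) = p1 at *
  generalize log (x - 1 / 24 - 1) = p2 at *
  generalize log (1 - 1 / mu (x + 1)) = g1 at *
  generalize log (1 - 1 / mu (x - 1)) = g2 at *
  generalize log (1 - 1 / mu x) = g0 at *
  have hid : 1 / (x + 1) * (log 12 / 2 - (log 24 + p1) + g1 + mu (x + 1))
        - 1 / (x + 1) * log (x + 1)
      + (1 / (x - 1) * (log 12 / 2 - (log 24 + p2) + g2 + mu (x - 1))
        - 1 / (x - 1) * log (x - 1))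
      - 2 * (1 / x * (log 12 / 2 - (log 24 + p0) + g0 + mu x) - 1 / x * log x)
      = (mu (x + 1) / (x + 1) + mu (x - 1) / (x - 1) - 2 * (mu x / x))
        - (-g1 / (x + 1) - g2 / (x - 1) + 2 * (g0 / x))
        + ((log x - log (x - 1)) / (x - 1) - (log (x + 1) - log x) / (x + 1))
        + ((p0 - p2) / (x - 1) - (p1 - p0) / (x + 1))
        + (log 12 - 2 * log x - 2 * (log 24 + p0)) / (x * (x ^ 2 - 1)) := by
    have : x ^ 2 - 1 = (x - 1) * (x + 1) := by ring
    rw [this]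
    field_simp
    ring
  have hnum : (log 12 - 2 * log x - 2 * (log 24 + p0) + 39 / 10) / (x * (x ^ 2 - 1))
      = (log 12 - 2 * log x - 2 * (log 24 + p0)) / (x * (x ^ 2 - 1))
        + 14 / 5 / (x * (x ^ 2 - 1)) + 14 / 5 / (x * (x ^ 2 - 1))
        - 17 / 10 / (x * (x ^ 2 - 1)) := by ring
  have hr : (-4 * log (mu (x - 1)) - 2 * log (x - 1) + 3) / (x - 1) ^ 3
      = -(4 * log (mu (x - 1)) / (x - 1) ^ 3) - 2 * log (x - 1) / (x - 1) ^ 3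
        + 3 / (x - 1) ^ 3 := by ring
  rw [gt_iff_lt, hid]
  linarith
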